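/- For every r ≥ 3 and every mismatched pair {P, Q} of distinct r-patterns, there exists j ∈ {1, ..., r} such that {P^(−j), Q^(−j)} is a mismatched pair of distinct (r−1)-patterns, where for an r-pattern S, S^(−j) denotes the (r−1)-pattern obtained by deleting from each of the two edges of S its j-th smallest element and relabeling the remaining 2(r−1) vertices order-preservingly by [2(r−1)]. -/

import Mathlib

open Finset
open scoped Classical

/-- An ordered `r`-matching of size `n`: a partition of `[r*n] = {1,…,r*n}` into `n`
pairwise disjoint `r`-element subsets (the edges). -/
def IsOrderedMatching (r n : ℕ) (M : Finset (Finset ℕ)) : Prop :=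
  M.card = n ∧ (∀ e ∈ M, e.card = r) ∧
  (∀ e ∈ M, ∀ f ∈ M, e ≠ f → Disjoint e f) ∧
  M.biUnion id = Finset.Icc 1 (r * n)

/-- Two disjoint `r`-element sets `e`, `f` form the `r`-pattern `P`: the unique
order-preserving bijection from `e ∪ f` onto `[2r]` maps the pair `{e, f}` onto `P`. -/
def FormsPattern (r : ℕ) (e f : Finset ℕ) (P : Finset (Finset ℕ)) : Prop :=
  ∃ φ : ℕ → ℕ, StrictMonoOn φ ↑(e ∪ f) ∧
    (e ∪ f).image φ = Finset.Icc 1 (2 * r) ∧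
    ({e.image φ, f.image φ} : Finset (Finset ℕ)) = P

/-- A `Ps`-clique: a family of pairwise disjoint `r`-element subsets of `ℕ`, every two of
which form a pattern belonging to `Ps`. -/
def IsClique (r : ℕ) (Ps : Set (Finset (Finset ℕ))) (K : Finset (Finset ℕ)) : Prop :=
  (∀ e ∈ K, e.card = r) ∧ (∀ e ∈ K, ∀ f ∈ K, e ≠ f → Disjoint e f) ∧
  (∀ e ∈ K, ∀ f ∈ K, e ≠ f → ∃ P ∈ Ps, FormsPattern r e f P)

/-- `z_Ps(M)`: the maximum size of a subfamily of `M` that is a `Ps`-clique. -/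
noncomputable def zClique (r : ℕ) (Ps : Set (Finset (Finset ℕ))) (M : Finset (Finset ℕ)) : ℕ :=
  sSup {k | ∃ K : Finset (Finset ℕ), K ⊆ M ∧ IsClique r Ps K ∧ K.card = k}

/-- All ordered `r`-matchings of size `n` (as a finset). -/
noncomputable def matchingFamilies (r n : ℕ) : Finset (Finset (Finset ℕ)) :=
  ((Finset.Icc 1 (r * n)).powerset.powerset).filter (IsOrderedMatching r n)

/-- The probability of the event `A` for a uniformly random ordered `r`-matching of size `n`. -/
noncomputable def prob (r n : ℕ) (A : Finset (Finset ℕ) → Prop) : ℝ :=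
  (((matchingFamilies r n).filter A).card : ℝ) / ((matchingFamilies r n).card : ℝ)

/-- Expectation of `X` with respect to a uniformly random ordered `r`-matching of size `n`. -/
noncomputable def expect (r n : ℕ) (X : Finset (Finset ℕ) → ℝ) : ℝ :=
  (∑ M ∈ matchingFamilies r n, X M) / ((matchingFamilies r n).card : ℝ)

/-- An `r`-partite `r`-pattern: each edge contains exactly one of `{2i-1, 2i}` for each
`i = 1, …, r`. -/
def IsPartitePattern (r : ℕ) (P : Finset (Finset ℕ)) : Prop :=
  IsOrderedMatching r 2 P ∧
  ∀ e ∈ P, ∀ i ∈ Finset.Icc 1 r, (e ∩ {2 * i - 1, 2 * i}).card = 1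

/-- An `r`-pattern `P` is collectable if there exist arbitrarily large `{P}`-cliques. -/
def Collectable (r : ℕ) (P : Finset (Finset ℕ)) : Prop :=
  ∀ k : ℕ, ∃ K : Finset (Finset ℕ), IsClique r {P} K ∧ K.card = k

/-- The word of a pattern `P` over `{A=true, B=false}`: the `j`-th letter is `true` iff
vertex `j` lies in the edge of `P` containing `1`. -/
noncomputable def patternWord (r : ℕ) (P : Finset (Finset ℕ)) : List Bool :=
  (List.range (2 * r)).map (fun j => decide (∃ e ∈ P, 1 ∈ e ∧ j + 1 ∈ e))

/-- `lam` is a splitting of the word `w` into consecutive blocks of the form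
`A^t B^t` or `B^t A^t` with half-lengths given by `lam`. -/
def IsBlockSplitting (w : List Bool) (lam : List ℕ) : Prop :=
  (∀ t ∈ lam, 1 ≤ t) ∧
  ∃ bs : List Bool, bs.length = lam.length ∧
    w = (List.zipWith (fun t b => List.replicate t b ++ List.replicate t !b) lam bs).flatten

/-- The pattern `P` has composition `lam` (the sequence of half-lengths of the blocks of
its unique splitting). -/
def HasComposition (r : ℕ) (P : Finset (Finset ℕ)) (lam : List ℕ) : Prop :=
  IsBlockSplitting (patternWord r P) lam

/-- Two distinct collectable `r`-patterns are harmonious if they have the same composition. -/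
def Harmonious (r : ℕ) (P Q : Finset (Finset ℕ)) : Prop :=
  P ≠ Q ∧ Collectable r P ∧ Collectable r Q ∧
  ∃ lam : List ℕ, HasComposition r P lam ∧ HasComposition r Q lam

/-- A pair of distinct `r`-patterns is a mismatch if exactly one of them is collectable, or
both are collectable but their compositions differ. -/
def Mismatch (r : ℕ) (P Q : Finset (Finset ℕ)) : Prop :=
  P ≠ Q ∧
  ((Collectable r P ∧ ¬ Collectable r Q) ∨
   (¬ Collectable r P ∧ Collectable r Q) ∨
   (Collectable r P ∧ Collectable r Q ∧
     ¬ ∃ lam : List ℕ, HasComposition r P lam ∧ HasComposition r Q lam))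

/-- The trace of an ordered `r`-matching of size `k` on `[rk]`: the `j`-th letter equals
`i` when `j` is the `i`-th smallest element of the edge containing `j`. -/
noncomputable def trace (r k : ℕ) (M : Finset (Finset ℕ)) : List ℕ :=
  (List.range (r * k)).map (fun j₀ =>
    ((Finset.Icc 1 (r * k)).filter
      (fun x => x ≤ j₀ + 1 ∧ ∃ e ∈ M, j₀ + 1 ∈ e ∧ x ∈ e)).card)

/-- `a_Ps(k)`: the number of `Ps`-cliques of size `k` whose edges partition `[rk]`. -/
noncomputable def cliqueCount (r : ℕ) (Ps : Set (Finset (Finset ℕ))) (k : ℕ) : ℕ :=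
  (((Finset.Icc 1 (r * k)).powerset.powerset).filter
    (fun M => IsOrderedMatching r k M ∧ IsClique r Ps M)).card

/-- The maximum size of any `Ps`-clique whatsoever. -/
noncomputable def maxCliqueSize (r : ℕ) (Ps : Set (Finset (Finset ℕ))) : ℕ :=
  sSup {k | ∃ K : Finset (Finset ℕ), IsClique r Ps K ∧ K.card = k}

/-- `M` contains a copy of the ordered `r`-matching `H` of size `k`: a subfamily `N ⊆ M` of
`k` edges such that the order-preserving bijection from the union of the edges of `N`
onto `[rk]` maps `N` onto `H`. -/
def ContainsCopy (r k : ℕ) (H M : Finset (Finset ℕ)) : Prop :=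
  ∃ N ⊆ M, N.card = k ∧ ∃ φ : ℕ → ℕ,
    StrictMonoOn φ ↑(N.biUnion id) ∧
    (N.biUnion id).image φ = Finset.Icc 1 (r * k) ∧
    N.image (fun e => e.image φ) = H

/-- Delete the `j`-th smallest element of the finite set `e`. -/
def deleteJth (j : ℕ) (e : Finset ℕ) : Finset ℕ :=
  e.filter (fun x => (e.filter (· ≤ x)).card ≠ j)

/-- Relabel the elements of `e` order-preservingly by their ranks in `V`. -/
def relabel (V : Finset ℕ) (e : Finset ℕ) : Finset ℕ :=
  e.image (fun x => (V.filter (· ≤ x)).card)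

/-- `S^(−j)`: delete from each edge of the pattern `S` its `j`-th smallest element and
relabel the remaining vertices order-preservingly. -/
def patternDelete (j : ℕ) (S : Finset (Finset ℕ)) : Finset (Finset ℕ) :=
  (S.image (deleteJth j)).image (relabel ((S.image (deleteJth j)).biUnion id))

/-!
Call ranks `i ≤ k` linked in a pattern if the `k`-th smallest element of one of its edges precedes
the `i`-th smallest element of the other one. Deleting the `j`-th smallest elements of the edges
restricts this reflexive relation, which is closed under shrinking the interval `[i, k]`, to the
ranks other than `j`.

A pattern is collectable if and only if the relation is transitive. If `i ~ m ~ k`, then in three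
edges of a clique, `x`, `y`, `z` in the order of their `i`-th elements, the `k`-th element of `x`
precedes the `m`-th one of `y`, which precedes the `i`-th one of `z`; hence `i ~ k`. Conversely, if
the relation is transitive, then its classes are intervals of ranks on each of which one edge
precedes the other, and any number of edges can be interleaved interval by interval in this way. The
classes are then the blocks of the word of the pattern, so the relation and the composition
determine each other.

Thus a pair of patterns is a mismatch if and only if the two relations differ and at least one of
them is transitive. If they differ at `(i, k)`, then both properties survive the deletion of any
rank `j` other than `i` and `k`, and such a `j` exists as soon as `r ≥ 3`.
-/

section

variable {r : ℕ}

section Rank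

variable {α : Type*} [LinearOrder α]

/-- The rank of `x` in `V`, counted from `1` for the elements of `V` themselves. -/
def rankIn (V : Finset α) (x : α) : ℕ := #{y ∈ V | y ≤ x}

lemma rankIn_le_card (V : Finset α) (x : α) : rankIn V x ≤ #V := card_filter_le _ _

lemma rankIn_mono (V : Finset α) : Monotone (rankIn V) := fun _ _ h =>
  card_le_card (monotone_filter_right _ fun _ _ hy => hy.trans h)

lemma rankIn_lt_rankIn {V : Finset α} {x y : α} (hy : y ∈ V) (h : x < y) :
    rankIn V x < rankIn V y :=
  card_lt_card <| (ssubset_iff_of_subset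
    (monotone_filter_right _ fun _ _ hz => hz.trans h.le)).2 ⟨y, by simpa using hy, by simp [h]⟩

lemma rankIn_strictMonoOn (V : Finset α) : StrictMonoOn (rankIn V) V :=
  fun _ _ _ hy h => rankIn_lt_rankIn hy h

lemma rankIn_pos {V : Finset α} {x : α} (hx : x ∈ V) : 0 < rankIn V x :=
  card_pos.2 ⟨x, by simpa using hx⟩

lemma image_rankIn (V : Finset α) : V.image (rankIn V) = Icc 1 #V := by
  refine eq_of_subset_of_card_le (image_subset_iff.2 fun x hx => ?_) ?_
  · exact mem_Icc.2 ⟨rankIn_pos hx, rankIn_le_card V x⟩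
  · rw [card_image_of_injOn (rankIn_strictMonoOn V).injOn, Nat.card_Icc, Nat.add_sub_cancel]

end Rank

/-- The edge enumerated increasingly by `a`, so that `a i` is its `(i + 1)`-st smallest element. -/
def edgeOf (a : Fin r ↪o ℕ) : Finset ℕ := univ.map a.toEmbedding

@[simp] lemma mem_edgeOf {a : Fin r ↪o ℕ} {x : ℕ} : x ∈ edgeOf a ↔ ∃ i, a i = x := by
  simp [edgeOf]

lemma apply_mem_edgeOf (a : Fin r ↪o ℕ) (i : Fin r) : a i ∈ edgeOf a := mem_edgeOf.2 ⟨i, rfl⟩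

@[simp] lemma card_edgeOf (a : Fin r ↪o ℕ) : #(edgeOf a) = r := by simp [edgeOf]

lemma edgeOf_eq_image (a : Fin r ↪o ℕ) : edgeOf a = univ.image a := map_eq_image _ _

lemma edgeOf_injective : Function.Injective (edgeOf (r := r)) := fun a b h => by
  rw [← OrderEmbedding.range_inj]
  ext x
  simpa using Finset.ext_iff.1 h x

lemma exists_edgeOf_eq {e : Finset ℕ} (he : #e = r) : ∃ a : Fin r ↪o ℕ, edgeOf a = e :=
  ⟨e.orderEmbOfFin he, e.map_orderEmbOfFin_univ he⟩

lemma rankIn_edgeOf_apply (a : Fin r ↪o ℕ) (i : Fin r) : rankIn (edgeOf a) (a i) = i + 1 := by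
  have : {x ∈ edgeOf a | x ≤ a i} = (Iic i).map a.toEmbedding := by
    ext x
    simp only [mem_filter, mem_edgeOf, mem_map, mem_Iic]
    constructor
    · rintro ⟨⟨k, rfl⟩, hk⟩
      exact ⟨k, a.le_iff_le.1 hk, rfl⟩
    · rintro ⟨k, hk, rfl⟩
      exact ⟨⟨k, rfl⟩, a.monotone hk⟩
  rw [rankIn, this, card_map, Fin.card_Iic]

lemma lt_rankIn_edgeOf_iff {a : Fin r ↪o ℕ} {i : Fin r} {x : ℕ} :
    (i : ℕ) < rankIn (edgeOf a) x ↔ a i ≤ x := by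
  refine ⟨fun h => ?_, fun h => ?_⟩
  · by_contra! hx
    have := rankIn_lt_rankIn (apply_mem_edgeOf a i) hx
    rw [rankIn_edgeOf_apply] at this
    omega
  · have := rankIn_mono (edgeOf a) h
    rw [rankIn_edgeOf_apply] at this
    omega

/-- Ranks `i ≤ k` are linked in `S` if the element of rank `k` of one edge of `S` precedes the
element of rank `i` of another one. In a collectable pattern this says that `i` and `k` lie in the
same block. Ranks start from `0` here, and distinctness of the two edges is automatic. -/
def Linked (S : Finset (Finset ℕ)) (i k : Fin r) : Prop :=
  i ≤ k ∧ ∃ a b : Fin r ↪o ℕ, edgeOf a ∈ S ∧ edgeOf b ∈ S ∧ a k < b i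

lemma Linked.mono {S : Finset (Finset ℕ)} {i p q k : Fin r} (h : Linked S i k) (hip : i ≤ p)
    (hpq : p ≤ q) (hqk : q ≤ k) : Linked S p q := by
  obtain ⟨-, a, b, ha, hb, hab⟩ := h
  exact ⟨hpq, a, b, ha, hb, (a.monotone hqk).trans_lt (hab.trans_le (b.monotone hip))⟩

lemma linked_pair {a b : Fin r ↪o ℕ} {i k : Fin r} :
    Linked {edgeOf a, edgeOf b} i k ↔ i ≤ k ∧ (a k < b i ∨ b k < a i) := by
  simp only [Linked, mem_insert, mem_singleton, edgeOf_injective.eq_iff]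
  refine and_congr_right fun hik => ⟨?_, ?_⟩
  · rintro ⟨x, y, rfl | rfl, rfl | rfl, h⟩
    · exact absurd h (OrderEmbedding.monotone _ hik).not_gt
    · exact .inl h
    · exact .inr h
    · exact absurd h (OrderEmbedding.monotone _ hik).not_gt
  · rintro (h | h)
    · exact ⟨a, b, .inl rfl, .inr rfl, h⟩
    · exact ⟨b, a, .inr rfl, .inl rfl, h⟩

lemma linked_image {s : ℕ} {S : Finset (Finset ℕ)} (hS : ∀ e ∈ S, #e = r)
    {g : Finset ℕ → Finset ℕ} {T : (Fin r ↪o ℕ) → Fin s → ℕ}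
    (hT : ∀ a, edgeOf a ∈ S → StrictMono (T a))
    (hg : ∀ a, edgeOf a ∈ S → g (edgeOf a) = univ.image (T a)) {i k : Fin s} :
    Linked (S.image g) i k ↔
      i ≤ k ∧ ∃ a b, edgeOf a ∈ S ∧ edgeOf b ∈ S ∧ T a k < T b i := by
  have lift {b : Fin s ↪o ℕ} (hb : edgeOf b ∈ S.image g) : ∃ a, edgeOf a ∈ S ∧ T a = b := by
    obtain ⟨e, he, hgb⟩ := mem_image.1 hb
    obtain ⟨a, rfl⟩ := exists_edgeOf_eq (hS e he)
    refine ⟨a, he, congrArg DFunLike.coe (edgeOf_injective (a₁ := .ofStrictMono _ (hT a he)) ?_)⟩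
    rw [← hgb, hg a he, edgeOf_eq_image, OrderEmbedding.coe_ofStrictMono]
  have push {a} (ha : edgeOf a ∈ S) : edgeOf (.ofStrictMono _ (hT a ha)) ∈ S.image g :=
    mem_image.2 ⟨_, ha, by rw [hg a ha, edgeOf_eq_image, OrderEmbedding.coe_ofStrictMono]⟩
  refine and_congr_right fun _ => ⟨?_, ?_⟩
  · rintro ⟨x, y, hx, hy, hxy⟩
    obtain ⟨⟨a, ha, hax⟩, ⟨b, hb, hby⟩⟩ := And.intro (lift hx) (lift hy)
    exact ⟨a, b, ha, hb, by rwa [hax, hby]⟩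
  · rintro ⟨a, b, ha, hb, hab⟩
    exact ⟨_, _, push ha, push hb, hab⟩

lemma linked_image_image {S : Finset (Finset ℕ)} (hS : ∀ e ∈ S, #e = r) {φ : ℕ → ℕ}
    (hφ : StrictMonoOn φ (S.biUnion id : Finset ℕ)) {i k : Fin r} :
    Linked (S.image fun e => e.image φ) i k ↔ Linked S i k := by
  have mem {a : Fin r ↪o ℕ} (ha : edgeOf a ∈ S) (i : Fin r) : a i ∈ S.biUnion id :=
    mem_biUnion.2 ⟨_, ha, apply_mem_edgeOf a i⟩
  rw [linked_image hS (T := fun a => φ ∘ a)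
    (fun a ha i k hik => hφ (mem ha i) (mem ha k) (a.strictMono hik))
    (fun a _ => by rw [edgeOf_eq_image, image_image])]
  refine and_congr_right fun _ => exists₂_congr fun a b => and_congr_right fun ha =>
    and_congr_right fun hb => hφ.lt_iff_lt (mem ha k) (mem hb i)

lemma FormsPattern.linked_iff {e f : Finset ℕ} {P : Finset (Finset ℕ)} (he : #e = r) (hf : #f = r)
    (h : FormsPattern r e f P) {i k : Fin r} : Linked {e, f} i k ↔ Linked P i k := by
  obtain ⟨φ, hφ, -, rfl⟩ := h
  have : ({e.image φ, f.image φ} : Finset (Finset ℕ)) = image (fun e => e.image φ) {e, f} := by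
    simp
  rw [this, linked_image_image (by simp [he, hf]) (by simpa using hφ)]

/-! ### Deleting a rank -/

lemma deleteJth_succ_edgeOf (j : Fin (r + 1)) (a : Fin (r + 1) ↪o ℕ) :
    deleteJth (j + 1) (edgeOf a) = univ.image (a ∘ j.succAbove) := by
  ext x
  change x ∈ {y ∈ edgeOf a | rankIn (edgeOf a) y ≠ j + 1} ↔ _
  simp only [mem_filter, mem_edgeOf, mem_image, mem_univ, true_and, Function.comp_apply]
  constructor
  · rintro ⟨⟨k, rfl⟩, hk⟩
    rw [rankIn_edgeOf_apply, ne_eq, Nat.add_right_cancel_iff, Fin.val_inj] at hk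
    obtain ⟨i, rfl⟩ := Fin.exists_succAbove_eq hk
    exact ⟨i, rfl⟩
  · rintro ⟨i, rfl⟩
    refine ⟨⟨_, rfl⟩, ?_⟩
    rw [rankIn_edgeOf_apply, ne_eq, Nat.add_right_cancel_iff, Fin.val_inj]
    exact Fin.succAbove_ne j i

lemma card_deleteJth_succ {e : Finset ℕ} (he : #e = r + 1) (j : Fin (r + 1)) :
    #(deleteJth (j + 1) e) = r := by
  obtain ⟨a, rfl⟩ := exists_edgeOf_eq he
  rw [deleteJth_succ_edgeOf,
    card_image_of_injective _ (a.injective.comp Fin.succAbove_right_injective), card_fin]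

lemma linked_patternDelete {S : Finset (Finset ℕ)} (hS : ∀ e ∈ S, #e = r + 1) (j : Fin (r + 1))
    {i k : Fin r} :
    Linked (patternDelete (j + 1) S) i k ↔ Linked S (j.succAbove i) (j.succAbove k) := by
  have hS' : ∀ e ∈ S.image (deleteJth (j + 1)), #e = r :=
    forall_mem_image.2 fun e he => card_deleteJth_succ (hS e he) j
  refine (linked_image_image hS' (rankIn_strictMonoOn _)).trans ?_
  rw [linked_image hS (T := fun a => a ∘ j.succAbove)
    (fun a _ => a.strictMono.comp (Fin.strictMono_succAbove j))
    (fun a _ => deleteJth_succ_edgeOf j a), Linked, (Fin.strictMono_succAbove j).le_iff_le]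
  rfl

lemma isTrans_linked_patternDelete {S : Finset (Finset ℕ)} (hS : ∀ e ∈ S, #e = r + 1)
    (j : Fin (r + 1)) (h : IsTrans (Fin (r + 1)) (Linked S)) :
    IsTrans (Fin r) (Linked (patternDelete (j + 1) S)) :=
  ⟨fun i m k => by simpa only [linked_patternDelete hS] using h.trans _ _ _⟩

lemma injOn_of_forall_disjoint {α β : Type*} {S : Finset α} {g : α → Finset β}
    (hne : ∀ e ∈ S, (g e).Nonempty) (hd : ∀ e ∈ S, ∀ f ∈ S, e ≠ f → Disjoint (g e) (g f)) :
    Set.InjOn g S := fun e he f hf hef => by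
  by_contra h
  have := hd e he f hf h
  rw [hef, disjoint_self] at this
  exact (hne f hf).ne_empty this

lemma relabel_eq_image (V e : Finset ℕ) : relabel V e = e.image (rankIn V) := rfl

lemma isOrderedMatching_image_relabel {S : Finset (Finset ℕ)} (hr : 0 < r) (hS : ∀ e ∈ S, #e = r)
    (hd : ∀ e ∈ S, ∀ f ∈ S, e ≠ f → Disjoint e f) :
    IsOrderedMatching r #S (S.image (relabel (S.biUnion id))) := by
  set V := S.biUnion id with hV
  have hsub {e} (he : e ∈ S) : e ⊆ V := subset_biUnion_of_mem id he
  have hinj : Set.InjOn (rankIn V) V := (rankIn_strictMonoOn V).injOn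
  have hcard {e} (he : e ∈ S) : #(relabel V e) = r :=
    (card_image_of_injOn (hinj.mono (coe_subset.2 (hsub he)))).trans (hS e he)
  have hdisj : ∀ e ∈ S, ∀ f ∈ S, e ≠ f → Disjoint (relabel V e) (relabel V f) :=
    fun e he f hf hef => disjoint_coe.1 <| by
      simpa only [relabel_eq_image, coe_image] using Set.disjoint_image_image fun x hx y hy =>
        hinj.ne (hsub he hx) (hsub hf hy) (disjoint_iff_ne.1 (hd e he f hf hef) x hx y hy)
  refine ⟨card_image_of_injOn (injOn_of_forall_disjoint (fun e he => ?_) hdisj),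
    forall_mem_image.2 fun e he => hcard he, ?_, ?_⟩
  · exact card_pos.1 (hr.trans_eq (hcard he).symm)
  · exact forall_mem_image.2 fun e he => forall_mem_image.2 fun f hf hef =>
      hdisj e he f hf fun h => hef (congrArg _ h)
  · calc
      (S.image (relabel V)).biUnion id = V.image (rankIn V) := by
        rw [image_biUnion, hV, biUnion_image]; rfl
      _ = Icc 1 (r * #S) := by
        rw [image_rankIn, hV, card_biUnion (t := id) hd, sum_const_nat (f := fun e => #(id e)) hS,
          mul_comm]

lemma IsOrderedMatching.patternDelete_succ {n : ℕ} {P : Finset (Finset ℕ)} (hr : 0 < r)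
    (hP : IsOrderedMatching (r + 1) n P) (j : Fin (r + 1)) :
    IsOrderedMatching r n (patternDelete (j + 1) P) := by
  obtain ⟨rfl, hcard, hdisj, -⟩ := hP
  have hdel : ∀ e ∈ P, #(deleteJth (j + 1) e) = r := fun e he => card_deleteJth_succ (hcard e he) j
  have hdel' : ∀ e ∈ P, ∀ f ∈ P, e ≠ f → Disjoint (deleteJth (j + 1) e) (deleteJth (j + 1) f) :=
    fun e he f hf hef => (hdisj e he f hf hef).mono (filter_subset _ _) (filter_subset _ _)
  rw [← card_image_of_injOn (injOn_of_forall_disjoint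
    (fun e he => card_pos.1 (hr.trans_eq (hdel e he).symm)) hdel')]
  exact isOrderedMatching_image_relabel hr (forall_mem_image.2 hdel) <|
    forall_mem_image.2 fun e he => forall_mem_image.2 fun f hf hef =>
      hdel' e he f hf fun h => hef (congrArg _ h)

/-! ### Collectability -/

/-- The edges of the pattern `P` enumerated increasingly by `a true` and `a false`. The edge
containing `1` is the one named `true`, in agreement with `patternWord`. -/
structure IsEnumeration (a : Bool → Fin r ↪o ℕ) (P : Finset (Finset ℕ)) : Prop where
  eq_pair : P = {edgeOf (a true), edgeOf (a false)}
  disjoint : Disjoint (edgeOf (a true)) (edgeOf (a false))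
  union_eq : edgeOf (a true) ∪ edgeOf (a false) = Icc 1 (2 * r)
  one_mem : 1 ∈ edgeOf (a true)

lemma IsOrderedMatching.exists_isEnumeration {P : Finset (Finset ℕ)}
    (hP : IsOrderedMatching r 2 P) : ∃ a : Bool → Fin r ↪o ℕ, IsEnumeration a P := by
  obtain ⟨hcard, hr, hdisj, hunion⟩ := hP
  obtain ⟨e, f, hef, rfl⟩ := card_eq_two.1 hcard
  obtain ⟨a, rfl⟩ := exists_edgeOf_eq (hr e (by simp))
  obtain ⟨b, rfl⟩ := exists_edgeOf_eq (hr f (by simp))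
  have hab : Disjoint (edgeOf a) (edgeOf b) := hdisj _ (by simp) _ (by simp) hef
  have hunion : edgeOf a ∪ edgeOf b = Icc 1 (2 * r) := by simpa [mul_comm r] using hunion
  have hr_pos : 0 < r := by
    by_contra! h
    obtain rfl := Nat.le_zero.1 h
    exact hef (congrArg _ (RelEmbedding.ext fun i => i.elim0))
  have one_mem : 1 ∈ edgeOf a ∪ edgeOf b := hunion ▸ mem_Icc.2 ⟨le_rfl, by omega⟩
  rcases mem_union.1 one_mem with h | h
  · exact ⟨fun c => bif c then a else b, rfl, hab, hunion, h⟩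
  · exact ⟨fun c => bif c then b else a, pair_comm _ _, hab.symm, by rwa [union_comm], h⟩

namespace IsEnumeration

variable {P : Finset (Finset ℕ)} {a : Bool → Fin r ↪o ℕ}

lemma apply_ne (ha : IsEnumeration a P) (i k : Fin r) : a true i ≠ a false k :=
  disjoint_iff_ne.1 ha.disjoint _ (apply_mem_edgeOf _ i) _ (apply_mem_edgeOf _ k)

lemma linked_iff (ha : IsEnumeration a P) {i k : Fin r} :
    Linked P i k ↔ i ≤ k ∧ ∃ c, a c k < a (!c) i := by
  rw [ha.eq_pair, linked_pair]
  simp [or_comm]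

lemma linked_refl (ha : IsEnumeration a P) (i : Fin r) : Linked P i i := by
  rw [ha.linked_iff]
  rcases (ha.apply_ne i i).lt_or_gt with h | h
  exacts [⟨le_rfl, true, h⟩, ⟨le_rfl, false, h⟩]

end IsEnumeration

lemma FormsPattern.symm {e f : Finset ℕ} {P : Finset (Finset ℕ)} (h : FormsPattern r e f P) :
    FormsPattern r f e P := by
  obtain ⟨φ, hφ, himage, hP⟩ := h
  exact ⟨φ, by rwa [union_comm], by rwa [union_comm], by rwa [pair_comm]⟩

lemma exists_lt_lt_of_card_eq_three {K : Finset (Finset ℕ)} (hcard : ∀ e ∈ K, #e = r)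
    (hdisj : ∀ e ∈ K, ∀ f ∈ K, e ≠ f → Disjoint e f) (hK : #K = 3) (i : Fin r) :
    ∃ x y z : Fin r ↪o ℕ, (edgeOf x ∈ K ∧ edgeOf y ∈ K ∧ edgeOf z ∈ K) ∧ x i < y i ∧ y i < z i := by
  have hrange : (K : Set (Finset ℕ)) ⊆ edgeOf (r := r) '' Set.univ := fun e he => by
    simpa using exists_edgeOf_eq (hcard e he)
  obtain ⟨L, -, rfl⟩ := subset_set_image_iff.1 hrange
  have hinj : Set.InjOn (fun x : Fin r ↪o ℕ => x i) L := fun x hx y hy hxy => by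
    by_contra hne
    exact disjoint_left.1 (hdisj _ (mem_image_of_mem _ hx) _ (mem_image_of_mem _ hy)
      (edgeOf_injective.ne hne)) (apply_mem_edgeOf x i) (mem_edgeOf.2 ⟨i, hxy.symm⟩)
  rw [card_image_of_injective _ edgeOf_injective] at hK
  let v := (L.image fun x => x i).orderEmbOfFin ((card_image_of_injOn hinj).trans hK)
  have hv (t : Fin 3) : ∃ x ∈ L, x i = v t := mem_image.1 (orderEmbOfFin_mem _ _ t)
  obtain ⟨⟨x, hx, hxv⟩, ⟨y, hy, hyv⟩, ⟨z, hz, hzv⟩⟩ := And.intro (hv 0) (And.intro (hv 1) (hv 2))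
  refine ⟨x, y, z, ⟨mem_image_of_mem _ hx, mem_image_of_mem _ hy, mem_image_of_mem _ hz⟩, ?_, ?_⟩
  · rw [hxv, hyv]; exact v.strictMono (by decide)
  · rw [hyv, hzv]; exact v.strictMono (by decide)

lemma Collectable.isTrans_linked {P : Finset (Finset ℕ)} (hP : Collectable r P) :
    IsTrans (Fin r) (Linked P) := by
  obtain ⟨K, ⟨hcard, hdisj, hpat⟩, hK⟩ := hP 3
  have linked_iff {x y : Fin r ↪o ℕ} {i k l : Fin r} (hx : edgeOf x ∈ K) (hy : edgeOf y ∈ K)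
      (hxy : x l < y l) : Linked P i k ↔ i ≤ k ∧ (x k < y i ∨ y k < x i) := by
    have hne : edgeOf x ≠ edgeOf y := fun h => by simp [edgeOf_injective h] at hxy
    obtain ⟨_, rfl, h⟩ := hpat _ hx _ hy hne
    rw [← h.linked_iff (card_edgeOf x) (card_edgeOf y), linked_pair]
  refine ⟨fun i m k him hmk => ?_⟩
  obtain ⟨x, y, z, ⟨hx, hy, hz⟩, hxy, hyz⟩ := exists_lt_lt_of_card_eq_three hcard hdisj hK i
  have hik : i ≤ k := him.1.trans hmk.1
  have hxm : x m < y i := ((linked_iff hx hy hxy).1 him).2.resolve_right fun h =>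
    (h.trans hxy).not_ge (y.monotone him.1)
  have hym : y m < z i := ((linked_iff hy hz hyz).1 him).2.resolve_right fun h =>
    (h.trans hyz).not_ge (z.monotone him.1)
  have hxk : x k < y m := ((linked_iff hx hy hxy).1 hmk).2.resolve_right fun h =>
    (h.trans hxm).not_ge (y.monotone hik)
  exact (linked_iff hx hz (hxy.trans hyz)).2 ⟨hik, .inl (hxk.trans hym)⟩

lemma FormsPattern.ne_and_disjoint {e f : Finset ℕ} {P : Finset (Finset ℕ)}
    (hP : IsOrderedMatching r 2 P) (h : FormsPattern r e f P) : e ≠ f ∧ Disjoint e f := by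
  obtain ⟨φ, -, -, rfl⟩ := h
  have hne : e.image φ ≠ f.image φ := card_pair_eq_two_iff.1 hP.1
  exact ⟨fun h => hne (congrArg _ h),
    .of_image_finset (hP.2.2.1 _ (by simp) _ (by simp) hne)⟩

lemma collectable_of_forall_exists {P : Finset (Finset ℕ)} (hP : IsOrderedMatching r 2 P)
    (h : ∀ N, ∃ e : Fin N → Fin r ↪o ℕ,
      ∀ t u, t < u → FormsPattern r (edgeOf (e t)) (edgeOf (e u)) P) :
    Collectable r P := by
  intro N
  obtain ⟨e, he⟩ := h N
  have hpat {t u : Fin N} (htu : t ≠ u) : FormsPattern r (edgeOf (e t)) (edgeOf (e u)) P :=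
    htu.lt_or_gt.elim (he t u) fun hut => (he u t hut).symm
  have hinj : Function.Injective fun t => edgeOf (e t) := fun t u htu => by
    by_contra hne
    exact ((hpat hne).ne_and_disjoint hP).1 htu
  refine ⟨univ.image fun t => edgeOf (e t), ⟨?_, ?_, ?_⟩, ?_⟩
  · simp
  · simpa using fun t u hne => ((hpat fun h => hne (by rw [h])).ne_and_disjoint hP).2
  · simpa using fun t u hne => hpat fun h => hne (by rw [h])
  · rw [card_image_of_injective _ hinj, card_fin]

lemma exists_monotone_eq_iff {α : Type*} [LinearOrder α] [Finite α] {R : α → α → Prop}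
    (hrefl : ∀ i, R i i) (hconvex : ∀ i p q k, i ≤ p → p ≤ q → q ≤ k → R i k → R p q)
    (htrans : IsTrans α R) :
    ∃ s : α → ℕ, Monotone s ∧ ∀ i k, i ≤ k → (s i = s k ↔ R i k) := by
  have := Fintype.ofFinite α
  let U (k : α) : Finset α := {m | m < k ∧ ¬ R m k}
  have hU : Monotone U := fun i k hik m => by
    simp only [U, mem_filter, mem_univ, true_and]
    exact fun ⟨hmi, h⟩ => ⟨hmi.trans_le hik, fun hR => h (hconvex m m i k le_rfl hmi.le hik hR)⟩
  refine ⟨fun k => #(U k), fun i k hik => card_le_card (hU hik),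
    fun i k hik => ⟨fun h => ?_, fun h => ?_⟩⟩
  · by_contra hR
    have hlt : i < k := hik.lt_of_ne fun h => hR (h ▸ hrefl i)
    have : i ∈ U i := (eq_of_subset_of_card_le (hU hik) h.ge).ge (by simp [U, hlt, hR])
    simp [U] at this
  · refine congrArg card ((hU hik).antisymm fun m => ?_)
    simp only [U, mem_filter, mem_univ, true_and]
    rintro ⟨hmk, hR⟩
    exact ⟨lt_of_not_ge fun him => hR (hconvex i m k k him hmk.le le_rfl h),
      fun hmi => hR (htrans.trans m i k hmi h)⟩

namespace IsEnumeration

variable {P : Finset (Finset ℕ)} {a : Bool → Fin r ↪o ℕ}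

lemma injective (ha : IsEnumeration a P) :
    Function.Injective fun p : Bool × Fin r => a p.1 p.2 := by
  rintro ⟨_ | _, i⟩ ⟨_ | _, k⟩ h
  · simpa using h
  · exact absurd h.symm (ha.apply_ne k i)
  · exact absurd h (ha.apply_ne i k)
  · simpa using h

lemma formsPattern (ha : IsEnumeration a P) {b : Bool → Fin r ↪o ℕ}
    (hab : ∀ c d i k, a c i < a d k → b c i < b d k) :
    FormsPattern r (edgeOf (b true)) (edgeOf (b false)) P := by
  let A (p : Bool × Fin r) : ℕ := a p.1 p.2
  let B (p : Bool × Fin r) : ℕ := b p.1 p.2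
  have hBA : ∀ p q, B p < B q → A p < A q := fun p q h => by
    by_contra! hqp
    rcases hqp.lt_or_eq with hlt | heq
    · exact h.not_gt (hab _ _ _ _ hlt)
    · exact h.ne (by rw [ha.injective heq])
  have hB : Function.Injective B := fun p q h => ha.injective <| by
    by_contra! hne
    rcases hne.lt_or_gt with hlt | hlt
    · exact (hab _ _ _ _ hlt).ne h
    · exact (hab _ _ _ _ hlt).ne' h
  let φ : ℕ → ℕ := Function.extend B A 0
  have hφ (c : Bool) (i : Fin r) : φ (b c i) = a c i := hB.extend_apply A 0 (c, i)
  have himage (c : Bool) : (edgeOf (b c)).image φ = edgeOf (a c) := by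
    rw [edgeOf_eq_image, edgeOf_eq_image, image_image]
    exact image_congr fun i _ => hφ c i
  refine ⟨φ, ?_, by rw [image_union, himage, himage, ha.union_eq],
    by rw [himage, himage, ha.eq_pair]⟩
  have hmem : ∀ x ∈ edgeOf (b true) ∪ edgeOf (b false), ∃ p, B p = x := fun x hx => by
    simpa [B, or_comm] using hx
  intro x hx y hy hxy
  obtain ⟨⟨p, rfl⟩, ⟨q, rfl⟩⟩ := And.intro (hmem x hx) (hmem y hy)
  rw [hφ, hφ]
  exact hBA p q hxy

end IsEnumeration

/-- The position in a large clique of the vertex of rank `i` of the edge numbered `t`, for blocks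
of ranks given by the level sets of `s`. Vertices are sorted by block; within a block they are
sorted by edge, in increasing or decreasing order according to whether the block is `A⋯AB⋯B` or
`B⋯BA⋯A`, where `A` is the edge `a true`. -/
def cliqueKey (a : Bool → Fin r ↪o ℕ) (s : Fin r → ℕ) (t : ℤ) (i : Fin r) : ℕ ×ₗ ℤ ×ₗ Fin r :=
  toLex (s i, toLex (if a true i < a false i then t else -t, i))

namespace IsEnumeration

variable {P : Finset (Finset ℕ)} {a : Bool → Fin r ↪o ℕ} {s : Fin r → ℕ}

lemma exists_forall_lt (ha : IsEnumeration a P)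
    (hs : ∀ i k, i ≤ k → (s i = s k ↔ Linked P i k)) {x y : Fin r} (hxy : s x = s y) :
    ∃ d, ∀ p ∈ Set.uIcc x y, ∀ q ∈ Set.uIcc x y, a d p < a (!d) q := by
  wlog h : x ≤ y generalizing x y
  · rw [Set.uIcc_comm]
    exact this hxy.symm (le_of_not_ge h)
  rw [Set.uIcc_of_le h]
  obtain ⟨-, d, hd⟩ := ha.linked_iff.1 ((hs x y h).1 hxy)
  exact ⟨d, fun p hp q hq => ((a d).monotone hp.2).trans_lt (hd.trans_le ((a !d).monotone hq.1))⟩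

lemma cliqueKey_lt_cliqueKey (ha : IsEnumeration a P) (hmono : Monotone s)
    (hs : ∀ i k, i ≤ k → (s i = s k ↔ Linked P i k)) {τ : Bool → ℤ} (hτ : τ true < τ false)
    {c d : Bool} {x y : Fin r} (h : a c x < a d y) :
    cliqueKey a s (τ c) x < cliqueKey a s (τ d) y := by
  have hle : s x ≤ s y := by
    by_contra! hlt
    have hyx : y < x := hmono.reflect_lt hlt
    obtain rfl | rfl := Bool.eq_or_eq_not d c
    · exact h.not_gt ((a d).strictMono hyx)
    · exact hlt.ne ((hs y x hyx.le).2 (ha.linked_iff.2 ⟨hyx.le, c, h⟩))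
  simp only [cliqueKey, Prod.Lex.toLex_lt_toLex]
  refine hle.lt_or_eq.imp_right fun hxy => ⟨hxy, ?_⟩
  obtain ⟨e, he⟩ := ha.exists_forall_lt hs hxy
  have hsign {p : Fin r} (hp : p ∈ Set.uIcc x y) : a true p < a false p ↔ e = true := by
    have := he p hp p hp
    cases e
    · simpa using this.le
    · simpa using this
  simp only [hsign Set.left_mem_uIcc, hsign Set.right_mem_uIcc]
  obtain rfl | rfl := Bool.eq_or_eq_not d c
  · exact .inr ⟨rfl, (a d).lt_iff_lt.1 h⟩
  · left
    obtain rfl | rfl := Bool.eq_or_eq_not e c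
    · cases e <;> simpa using hτ
    · exact absurd (he y Set.right_mem_uIcc x Set.left_mem_uIcc) (by simpa using h.le)

end IsEnumeration

lemma collectable_of_isTrans_linked {P : Finset (Finset ℕ)} (hP : IsOrderedMatching r 2 P)
    (htrans : IsTrans (Fin r) (Linked P)) : Collectable r P := by
  obtain ⟨a, ha⟩ := hP.exists_isEnumeration
  obtain ⟨s, hmono, hs⟩ := exists_monotone_eq_iff ha.linked_refl
    (fun i p q k hip hpq hqk h => h.mono hip hpq hqk) htrans
  refine collectable_of_forall_exists hP fun N => ?_
  let V : Finset (ℕ ×ₗ ℤ ×ₗ Fin r) := univ.image fun p : Fin N × Fin r => cliqueKey a s p.1 p.2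
  have hV (t : Fin N) (i : Fin r) : cliqueKey a s t i ∈ V := mem_image.2 ⟨(t, i), mem_univ _, rfl⟩
  have key_strictMono (t : ℤ) : StrictMono (cliqueKey a s t) := fun i k hik =>
    ha.cliqueKey_lt_cliqueKey hmono hs (τ := fun c => bif c then t else t + 1) (by simp)
      (c := true) (d := true) ((a true).strictMono hik)
  let e (t : Fin N) : Fin r ↪o ℕ := .ofStrictMono (fun i => rankIn V (cliqueKey a s t i))
    fun i k hik => rankIn_lt_rankIn (hV t k) (key_strictMono t hik)
  refine ⟨e, fun t u htu => ?_⟩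
  exact ha.formsPattern (b := fun c => e (bif c then t else u)) fun c d i k hik =>
    rankIn_lt_rankIn (hV _ _) <| ha.cliqueKey_lt_cliqueKey hmono hs
      (τ := fun c => ((bif c then t else u : Fin N) : ℤ)) (by exact_mod_cast htu) hik

theorem collectable_iff_isTrans_linked {P : Finset (Finset ℕ)} (hP : IsOrderedMatching r 2 P) :
    Collectable r P ↔ IsTrans (Fin r) (Linked P) :=
  ⟨Collectable.isTrans_linked, collectable_of_isTrans_linked hP⟩

/-! ### Words -/

/-- The words `A⋯AB⋯B` (for `b = true`) and `B⋯BA⋯A` (for `b = false`) with `t` letters of each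
kind, which are the blocks of a splitting with half-length `t`. -/
def block (t : ℕ) (b : Bool) : List Bool := .replicate t b ++ .replicate t (!b)

@[simp] lemma count_block (t : ℕ) (b c : Bool) : (block t b).count c = t := by
  cases b <;> cases c <;> simp [block, List.count_replicate]

/-- The counterpart of `Linked` for words: in `w` some letter occurs for the `(k + 1)`-st time
before the other letter does for the `(i + 1)`-st time. -/
def WordLinked (w : List Bool) (i k : ℕ) : Prop :=
  i ≤ k ∧ ∃ c u, u <+: w ∧ k < u.count c ∧ u.count (!c) ≤ i

/-- `i ≤ k` belong to the same block when the natural numbers below the sum of `lam` are divided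
into consecutive intervals of lengths given by `lam`. -/
def SameBlock : List ℕ → ℕ → ℕ → Prop
  | [], _, _ => False
  | t :: lam, i, k => i ≤ k ∧ (k < t ∨ t ≤ i ∧ SameBlock lam (i - t) (k - t))

lemma prefix_append_iff {α : Type*} {u v w : List α} :
    u <+: v ++ w ↔ u <+: v ∨ ∃ u', u = v ++ u' ∧ u' <+: w := by
  refine ⟨fun h => ?_, ?_⟩
  · obtain huv | ⟨u', rfl⟩ := List.prefix_or_prefix_of_prefix h (List.prefix_append v w)
    · exact .inl huv
    · exact .inr ⟨u', rfl, (List.prefix_append_right_inj v).1 h⟩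
  · rintro (h | ⟨u', rfl, h⟩)
    · exact h.trans (List.prefix_append v w)
    · exact (List.prefix_append_right_inj v).2 h

lemma wordLinked_block_append {t : ℕ} {b : Bool} {w : List Bool} {i k : ℕ} :
    WordLinked (block t b ++ w) i k ↔
      i ≤ k ∧ (k < t ∨ t ≤ i ∧ WordLinked w (i - t) (k - t)) := by
  constructor
  · rintro ⟨hik, c, u, hu, hk, hi⟩
    obtain hu | ⟨v, rfl, hv⟩ := prefix_append_iff.1 hu
    · exact ⟨hik, .inl (hk.trans_le ((hu.count_le c).trans_eq (count_block t b c)))⟩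
    · rw [List.count_append, count_block] at hk hi
      exact ⟨hik, .inr ⟨by omega, by omega, c, v, hv, by omega, by omega⟩⟩
  · rintro ⟨hik, hk | ⟨ht, -, c, v, hv, hk, hi⟩⟩
    · exact ⟨hik, b, .replicate t b, by simp [block], by simpa using hk,
        by simp [List.count_replicate]⟩
    · refine ⟨hik, c, block t b ++ v, (List.prefix_append_right_inj _).2 hv, ?_, ?_⟩ <;>
      · rw [List.count_append, count_block]
        omega

lemma isBlockSplitting_nil {w : List Bool} : IsBlockSplitting w [] ↔ w = [] := by
  simp [IsBlockSplitting]

lemma isBlockSplitting_cons {w : List Bool} {t : ℕ} {lam : List ℕ} :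
    IsBlockSplitting w (t :: lam) ↔
      0 < t ∧ ∃ b w', w = block t b ++ w' ∧ IsBlockSplitting w' lam := by
  constructor
  · rintro ⟨hpos, bs, hlen, rfl⟩
    obtain ⟨b, bs, rfl⟩ := List.exists_cons_of_length_eq_add_one hlen
    refine ⟨hpos t (by simp), b, _, ?_, fun s hs => hpos s (by simp [hs]),
      bs, by simpa using hlen, rfl⟩
    simp [block]
  · rintro ⟨ht, b, _, rfl, hpos, bs, hlen, rfl⟩
    exact ⟨by simpa using ⟨ht, hpos⟩, b :: bs, by simp [hlen], by simp [block]⟩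

lemma IsBlockSplitting.wordLinked_iff_sameBlock {w : List Bool} {lam : List ℕ}
    (h : IsBlockSplitting w lam) {i k : ℕ} : WordLinked w i k ↔ SameBlock lam i k := by
  induction lam generalizing w i k with
  | nil => simp [isBlockSplitting_nil.1 h, WordLinked, SameBlock]
  | cons t lam ih =>
    obtain ⟨-, b, w', rfl, h'⟩ := isBlockSplitting_cons.1 h
    rw [wordLinked_block_append, SameBlock, ih h']

lemma SameBlock.le {lam : List ℕ} {i k : ℕ} (h : SameBlock lam i k) : i ≤ k := by
  cases lam with
  | nil => exact h.elim
  | cons => exact h.1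

lemma sameBlock_cons_zero {t k : ℕ} {lam : List ℕ} (ht : 0 < t) :
    SameBlock (t :: lam) 0 k ↔ k < t := by
  simp [SameBlock, ht.ne']

lemma sameBlock_cons_add {t i k : ℕ} {lam : List ℕ} :
    SameBlock (t :: lam) (i + t) (k + t) ↔ SameBlock lam i k := by
  simpa [SameBlock] using SameBlock.le

lemma eq_of_sameBlock_iff {lam mu : List ℕ} (hlam : ∀ t ∈ lam, 0 < t) (hmu : ∀ t ∈ mu, 0 < t)
    (h : ∀ i k, SameBlock lam i k ↔ SameBlock mu i k) : lam = mu := by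
  induction lam generalizing mu with
  | nil =>
    cases mu with
    | nil => rfl
    | cons u mu =>
      have hu := hmu u (by simp)
      exact ((h 0 0).2 ((sameBlock_cons_zero hu).2 hu)).elim
  | cons t lam ih =>
    have ht := hlam t (by simp)
    cases mu with
    | nil => exact ((h 0 0).1 ((sameBlock_cons_zero ht).2 ht)).elim
    | cons u mu =>
      have hu := hmu u (by simp)
      have htu : t = u := eq_of_forall_lt_iff fun k => by
        rw [← sameBlock_cons_zero ht, h, sameBlock_cons_zero hu]
      subst htu
      refine congrArg _ (ih (fun s hs => hlam s (by simp [hs])) (fun s hs => hmu s (by simp [hs]))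
        fun i k => ?_)
      rw [← sameBlock_cons_add, h, sameBlock_cons_add]

lemma exists_eq_replicate_append {α : Type*} (b : α) (w : List α) :
    ∃ t v, w = .replicate t b ++ v ∧ ¬ [b] <+: v := by
  induction w with
  | nil => exact ⟨0, [], by simp⟩
  | cons c w ih =>
    rcases eq_or_ne b c with rfl | hbc
    · obtain ⟨t, v, rfl, hv⟩ := ih
      exact ⟨t + 1, v, rfl, hv⟩
    · exact ⟨0, c :: w, rfl, by simpa using hbc⟩

lemma not_wordLinked_zero_of_replicate_append {t : ℕ} {b : Bool} {v : List Bool} (ht : 0 < t)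
    (hv : ¬ [b] <+: v) : ¬ WordLinked (.replicate t b ++ v) 0 t := by
  rintro ⟨-, c, u, hu, hcount, hzero⟩
  obtain hut | ⟨u, rfl, huv⟩ := prefix_append_iff.1 hu
  · exact hcount.not_ge ((List.count_le_length.trans hut.length_le).trans_eq (by simp))
  obtain rfl : c = b := by
    by_contra hcb
    simp [Bool.eq_not_of_ne hcb, ht.ne'] at hzero
  obtain - | ⟨x, u⟩ := u
  · simp at hcount
  · obtain rfl | rfl := Bool.eq_or_eq_not x c
    · exact hv ((List.prefix_append [x] u).trans huv)
    · simp at hzero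

/-- If the leading run of `b`s were longer than the run of `!b`s after it, then the lengths `t > s`
of these runs would satisfy `0 ~ s` and `s ~ t` but not `0 ~ t`. -/
lemma exists_eq_block_append {w : List Bool} (hne : w ≠ []) (hbal : w.count true = w.count false)
    (htrans : IsTrans ℕ (WordLinked w)) : ∃ t b w', 0 < t ∧ w = block t b ++ w' := by
  obtain ⟨b, w, rfl⟩ := List.exists_cons_of_ne_nil hne
  obtain ⟨t, v, hw, hv⟩ := exists_eq_replicate_append b (b :: w)
  have ht : 0 < t := Nat.pos_of_ne_zero fun h => by
    obtain rfl : b :: w = v := by simpa [h] using hw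
    simp at hv
  obtain ⟨s, v, rfl, hv'⟩ := exists_eq_replicate_append (!b) v
  rw [hw] at hbal htrans ⊢
  refine ⟨t, b, .replicate (s - t) (!b) ++ v, ht, ?_⟩
  have hts : t ≤ s := by
    by_contra! hst
    obtain - | ⟨x, v⟩ := v
    · cases b <;> simp [List.count_replicate] at hbal <;> omega
    obtain rfl : x = b := by
      by_contra hx
      exact hv' (by simp [Bool.eq_not_of_ne hx])
    have h0s : WordLinked (.replicate t x ++ (.replicate s (!x) ++ x :: v)) 0 s :=
      ⟨s.zero_le, x, .replicate t x, List.prefix_append .., by simpa using hst,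
        by simp [List.count_replicate]⟩
    have hst : WordLinked (.replicate t x ++ (.replicate s (!x) ++ x :: v)) s t :=
      ⟨hst.le, x, .replicate t x ++ (.replicate s (!x) ++ [x]), by simp,
        by simp [List.count_replicate], by simp [List.count_replicate]⟩
    exact not_wordLinked_zero_of_replicate_append ht hv (htrans.trans _ _ _ h0s hst)
  rw [block, List.append_assoc, ← List.append_assoc (.replicate t (!b)),
    List.replicate_append_replicate, Nat.add_sub_cancel' hts]

lemma exists_isBlockSplitting {w : List Bool} (hbal : w.count true = w.count false)
    (htrans : IsTrans ℕ (WordLinked w)) : ∃ lam, IsBlockSplitting w lam := by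
  induction hn : w.length using Nat.strong_induction_on generalizing w with | _ n ih
  by_cases hne : w = []
  · exact ⟨[], isBlockSplitting_nil.2 hne⟩
  obtain ⟨t, b, w', ht, rfl⟩ := exists_eq_block_append hne hbal htrans
  have linked_iff {i k : ℕ} : WordLinked w' i k ↔ WordLinked (block t b ++ w') (i + t) (k + t) := by
    simpa [wordLinked_block_append] using fun h : WordLinked w' i k => h.1
  have hlen : w'.length < n := by
    simp only [← hn, block, List.length_append, List.length_replicate]
    omega
  obtain ⟨lam, hlam⟩ : ∃ lam, IsBlockSplitting w' lam :=
    ih _ hlen (by simpa using hbal) ⟨fun i j k hij hjk =>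
      linked_iff.2 (htrans.trans _ _ _ (linked_iff.1 hij) (linked_iff.1 hjk))⟩ rfl
  exact ⟨t :: lam, isBlockSplitting_cons.2 ⟨ht, b, w', rfl, hlam⟩⟩

/-! ### Words of patterns -/

lemma rankIn_succ (V : Finset ℕ) (n : ℕ) :
    rankIn V (n + 1) = rankIn V n + if n + 1 ∈ V then 1 else 0 := by
  have : {y ∈ V | y ≤ n + 1} = {y ∈ V | y ≤ n} ∪ {y ∈ V | y = n + 1} := by
    rw [← filter_or]
    exact filter_congr fun y _ => Nat.le_succ_iff
  rw [rankIn, this, card_union_of_disjoint (disjoint_filter.2 (by omega)), filter_eq']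
  split_ifs <;> simp [rankIn]

lemma rankIn_eq_card {V : Finset ℕ} {x : ℕ} (h : ∀ y ∈ V, y ≤ x) : rankIn V x = #V := by
  rw [rankIn, filter_true_of_mem h]

namespace IsEnumeration

variable {P : Finset (Finset ℕ)} {a : Bool → Fin r ↪o ℕ}

lemma edgeOf_subset (ha : IsEnumeration a P) : ∀ c, edgeOf (a c) ⊆ Icc 1 (2 * r)
  | true => ha.union_eq ▸ subset_union_left
  | false => ha.union_eq ▸ subset_union_right

lemma apply_mem_Icc (ha : IsEnumeration a P) (c : Bool) (i : Fin r) : a c i ∈ Icc 1 (2 * r) :=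
  ha.edgeOf_subset c (apply_mem_edgeOf _ i)

lemma exists_mem_one_mem_iff (ha : IsEnumeration a P) {x : ℕ} :
    (∃ e ∈ P, 1 ∈ e ∧ x ∈ e) ↔ x ∈ edgeOf (a true) := by
  have : 1 ∉ edgeOf (a false) := disjoint_left.1 ha.disjoint ha.one_mem
  simp only [ha.eq_pair, mem_insert, mem_singleton, exists_eq_or_imp, exists_eq_left, ha.one_mem,
    this, true_and, false_and, or_false]

lemma decide_mem_eq_iff (ha : IsEnumeration a P) {x : ℕ} (hx : x ∈ Icc 1 (2 * r)) (c : Bool) :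
    decide (x ∈ edgeOf (a true)) = c ↔ x ∈ edgeOf (a c) := by
  cases c
  · rw [← ha.union_eq, mem_union] at hx
    have : x ∈ edgeOf (a true) → x ∉ edgeOf (a false) := fun h => disjoint_left.1 ha.disjoint h
    rw [decide_eq_false_iff_not]
    tauto
  · exact decide_eq_true_iff

lemma count_take_patternWord (ha : IsEnumeration a P) {n : ℕ} (hn : n ≤ 2 * r) (c : Bool) :
    ((patternWord r P).take n).count c = rankIn (edgeOf (a c)) n := by
  rw [patternWord, ← List.map_take, List.take_range, min_eq_left hn]
  simp only [ha.exists_mem_one_mem_iff]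
  induction n with
  | zero =>
    have : ∀ y ∈ edgeOf (a c), ¬ y ≤ 0 := fun y hy => by
      have := mem_Icc.1 (ha.edgeOf_subset c hy)
      omega
    rw [rankIn, filter_false_of_mem this]
    rfl
  | succ n ih =>
    have hmem := ha.decide_mem_eq_iff (mem_Icc.2 ⟨n.succ_pos, hn⟩) c
    rw [List.range_succ, List.map_append, List.count_append, ih (by omega), rankIn_succ]
    simp [List.count_singleton, ← hmem]

lemma count_patternWord (ha : IsEnumeration a P) (c : Bool) : (patternWord r P).count c = r := by
  have := ha.count_take_patternWord le_rfl c
  rwa [List.take_of_length_le (by simp [patternWord]),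
    rankIn_eq_card fun y hy => (mem_Icc.1 (ha.edgeOf_subset c hy)).2, card_edgeOf] at this

lemma wordLinked_patternWord (ha : IsEnumeration a P) {i k : ℕ} :
    WordLinked (patternWord r P) i k ↔ ∃ (hi : i < r) (hk : k < r), Linked P ⟨i, hi⟩ ⟨k, hk⟩ := by
  constructor
  · rintro ⟨hik, c, u, hu, hk, hi⟩
    have hlen : u.length ≤ 2 * r := hu.length_le.trans_eq (by simp [patternWord])
    rw [List.prefix_iff_eq_take.1 hu, ha.count_take_patternWord hlen] at hk hi
    have hkr : k < r := hk.trans_le ((rankIn_le_card _ _).trans_eq (card_edgeOf _))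
    have hk' : a c ⟨k, hkr⟩ ≤ u.length := lt_rankIn_edgeOf_iff.1 hk
    have hi' : u.length < a (!c) ⟨i, hik.trans_lt hkr⟩ :=
      lt_of_not_ge fun h => hi.not_gt (lt_rankIn_edgeOf_iff.2 h)
    exact ⟨hik.trans_lt hkr, hkr, ha.linked_iff.2 ⟨hik, c, hk'.trans_lt hi'⟩⟩
  · rintro ⟨hi, hk, hlinked⟩
    obtain ⟨hik, c, hc⟩ := ha.linked_iff.1 hlinked
    refine ⟨hik, c, (patternWord r P).take (a c ⟨k, hk⟩), List.take_prefix _ _, ?_, ?_⟩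
    all_goals rw [ha.count_take_patternWord (mem_Icc.1 (ha.apply_mem_Icc c _)).2]
    · exact lt_rankIn_edgeOf_iff (i := ⟨k, hk⟩).2 le_rfl
    · exact le_of_not_gt fun h => hc.not_ge (lt_rankIn_edgeOf_iff.1 h)

end IsEnumeration

/-! ### Mismatches -/

lemma IsOrderedMatching.sameBlock_iff_linked {P : Finset (Finset ℕ)} (hP : IsOrderedMatching r 2 P)
    {lam : List ℕ} (hlam : HasComposition r P lam) {i k : ℕ} :
    SameBlock lam i k ↔ ∃ (hi : i < r) (hk : k < r), Linked P ⟨i, hi⟩ ⟨k, hk⟩ := by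
  obtain ⟨a, ha⟩ := hP.exists_isEnumeration
  rw [← hlam.wordLinked_iff_sameBlock, ha.wordLinked_patternWord]

lemma IsOrderedMatching.exists_hasComposition {P : Finset (Finset ℕ)}
    (hP : IsOrderedMatching r 2 P) (htrans : IsTrans (Fin r) (Linked P)) :
    ∃ lam, HasComposition r P lam := by
  obtain ⟨a, ha⟩ := hP.exists_isEnumeration
  refine exists_isBlockSplitting (by rw [ha.count_patternWord, ha.count_patternWord]) ⟨?_⟩
  simp only [ha.wordLinked_patternWord]
  rintro i j k ⟨hi, _, hij⟩ ⟨_, hk, hjk⟩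
  exact ⟨hi, hk, htrans.trans _ _ _ hij hjk⟩

lemma exists_common_hasComposition_iff {P Q : Finset (Finset ℕ)} (hP : IsOrderedMatching r 2 P)
    (hQ : IsOrderedMatching r 2 Q) (hPtrans : IsTrans (Fin r) (Linked P))
    (hQtrans : IsTrans (Fin r) (Linked Q)) :
    (∃ lam, HasComposition r P lam ∧ HasComposition r Q lam) ↔
      (Linked P : Fin r → Fin r → Prop) = Linked Q := by
  constructor
  · rintro ⟨lam, hlamP, hlamQ⟩
    ext i k
    simpa [i.2, k.2] using
      (hP.sameBlock_iff_linked hlamP (i := i) (k := k)).symm.trans (hQ.sameBlock_iff_linked hlamQ)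
  · intro h
    obtain ⟨lam, hlam⟩ := hP.exists_hasComposition hPtrans
    obtain ⟨mu, hmu⟩ := hQ.exists_hasComposition hQtrans
    obtain rfl : lam = mu := eq_of_sameBlock_iff hlam.1 hmu.1 fun i k => by
      rw [hP.sameBlock_iff_linked hlam, hQ.sameBlock_iff_linked hmu, h]
    exact ⟨lam, hlam, hmu⟩

theorem mismatch_iff {P Q : Finset (Finset ℕ)} (hP : IsOrderedMatching r 2 P)
    (hQ : IsOrderedMatching r 2 Q) :
    Mismatch r P Q ↔ (∃ i k : Fin r, ¬ (Linked P i k ↔ Linked Q i k)) ∧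
      (IsTrans (Fin r) (Linked P) ∨ IsTrans (Fin r) (Linked Q)) := by
  have hne : (∃ i k : Fin r, ¬ (Linked P i k ↔ Linked Q i k)) ↔
      (Linked P : Fin r → Fin r → Prop) ≠ Linked Q := by
    simp [funext_iff]
  rw [Mismatch, collectable_iff_isTrans_linked hP, collectable_iff_isTrans_linked hQ, hne]
  have hcomp := exists_common_hasComposition_iff hP hQ
  have hPQ : P = Q → (Linked P : Fin r → Fin r → Prop) = Linked Q := fun h => h ▸ rfl
  have htrans (h : (Linked P : Fin r → Fin r → Prop) = Linked Q) :
      IsTrans (Fin r) (Linked P) ↔ IsTrans (Fin r) (Linked Q) := by rw [h]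
  clear hne
  grind

end

/-- **Observation.** For every `r ≥ 3` and every mismatched pair `{P, Q}` of distinct
`r`-patterns there exists `j ∈ {1, …, r}` such that `{P^(−j), Q^(−j)}` is a mismatched pair
of distinct `(r−1)`-patterns. -/
theorem mismatch_inheritance (r : ℕ) (hr : 3 ≤ r) (P Q : Finset (Finset ℕ))
    (hP : IsOrderedMatching r 2 P) (hQ : IsOrderedMatching r 2 Q)
    (hmis : Mismatch r P Q) :
    ∃ j ∈ Finset.Icc 1 r,
      IsOrderedMatching (r - 1) 2 (patternDelete j P) ∧
      IsOrderedMatching (r - 1) 2 (patternDelete j Q) ∧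
      Mismatch (r - 1) (patternDelete j P) (patternDelete j Q) := by
  obtain ⟨n, rfl⟩ : ∃ n, r = n + 1 := ⟨r - 1, by omega⟩
  rw [Nat.add_sub_cancel]
  obtain ⟨⟨i, k, hik⟩, htrans⟩ := (mismatch_iff hP hQ).1 hmis
  obtain ⟨j, hji, hjk⟩ : ∃ j : Fin (n + 1), i ≠ j ∧ k ≠ j := by
    obtain ⟨j, -, hj⟩ := exists_mem_notMem_of_card_lt_card (s := {i, k}) (t := univ)
      (card_le_two.trans_lt (by rw [card_fin]; omega))
    exact ⟨j, by simpa [eq_comm] using hj⟩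
  obtain ⟨i, rfl⟩ := Fin.exists_succAbove_eq hji
  obtain ⟨k, rfl⟩ := Fin.exists_succAbove_eq hjk
  have hP' := hP.patternDelete_succ (by omega) j
  have hQ' := hQ.patternDelete_succ (by omega) j
  refine ⟨j + 1, mem_Icc.2 ⟨by omega, j.2⟩, hP', hQ', (mismatch_iff hP' hQ').2 ⟨⟨i, k, ?_⟩, ?_⟩⟩
  · rwa [linked_patternDelete hP.2.1, linked_patternDelete hQ.2.1]
  · exact htrans.imp (isTrans_linked_patternDelete hP.2.1 j) (isTrans_linked_patternDelete hQ.2.1 j)
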